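/- Let p be a prime, r ≥ 2 an integer, and K a totally real abelian number field of conductor p^r, of degree n over ℚ and with D_K the absolute value of the discriminant of K. Then the Euclidean minimum of K satisfies M(K) ≤ 2^{-n} · √(D_K). -/

import Mathlib

open NumberField

/-- The Euclidean minimum of a number field `K`:
`M(K) = sup_{x ∈ K} inf_{c ∈ O_K} |N_{K/ℚ}(x − c)|`. -/
noncomputable def euclideanMinimum (K : Type*) [Field K] [NumberField K] : ℝ :=
  ⨆ x : K, ⨅ c : 𝓞 K, |((Algebra.norm ℚ (x - (c : K)) : ℚ) : ℝ)|

/-- A number field `K` has conductor `f` if `f` is the smallest positive integer such that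
`K` embeds into the `f`-th cyclotomic field `ℚ(ζ_f)`.  (Such a `K` is automatically an
abelian extension of `ℚ`.) -/
def HasConductor (K : Type*) [Field K] [NumberField K] (f : ℕ+) : Prop :=
  Nonempty (K →ₐ[ℚ] CyclotomicField f ℚ) ∧
    ∀ m : ℕ+, Nonempty (K →ₐ[ℚ] CyclotomicField m ℚ) → f ≤ m

/-!
Let `q = p ^ (k + 1)` be the conductor, `L = ℚ(ζ)` the `q`-th cyclotomic field and `m = [L : K]`.
Write `x ∈ K` as `∑ j, b j * ζ ^ j` with rational coefficients `b`, indexed by `ZMod q` and constant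
on the orbits of `Gal(L/K)`. Since `∑ j, ζ ^ j = 0`, one may round the shifted numbers `b j + t` for
any real `t`, and rounding an invariant family gives an element `c` of `𝓞 K`. The squared absolute
values of the embeddings of `x - c` sum to `p ^ k * (p * ∑ e j ^ 2 - ∑ (class sums) ^ 2)`, where
`e j` are the rounding errors, summed over the classes modulo `p ^ k`. A class sum is at least its
distance to `ℤ` in absolute value, and this distance has mean square `1 / 12` over `t`, just like
each `e j`. So for a suitable `t` the inequality of arithmetic and geometric means yields
`|N(x - c)| ^ (2 * m) ≤ (p ^ k * (p + 1) / 12) ^ (p ^ k * (p - 1))`.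

For the discriminant, the different of `L/K` divides `∏ σ ≠ 1, (ζ - σ ζ)`. As `K` is contained in no
smaller cyclotomic field, `Gal(L/K)` embeds into `(ℤ/p)ˣ` if `p` is odd, so all these factors have
norm `p` and there are at most `p - 2` of them; this is enough. If `p = 2` and `K` is real, then
`Gal(L/K)` is generated by complex conjugation, and the bound is saved by approximating
`(1 + ζ) * x` instead of `x`, where `N(1 + ζ) = 2`.
-/

section RandomShift

open MeasureTheory

theorem integral_unitAddCircle_norm_sq : ∫ t : UnitAddCircle, ‖t‖ ^ 2 = 1 / 12 := by
  rw [← UnitAddCircle.intervalIntegral_preimage (-(1 / 2))]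
  calc ∫ t in (-(1 / 2) : ℝ)..-(1 / 2) + 1, ‖(t : UnitAddCircle)‖ ^ 2
      = ∫ t in (-(1 / 2) : ℝ)..-(1 / 2) + 1, t ^ 2 := by
        refine intervalIntegral.integral_congr fun t ht => ?_
        rw [Set.uIcc_of_le (by norm_num), Set.mem_Icc] at ht
        have hnorm : ‖(t : UnitAddCircle)‖ = |t| :=
          (AddCircle.norm_coe_eq_abs_iff 1 one_ne_zero).mpr
            (abs_le.mpr ⟨by norm_num; linarith, by norm_num; linarith⟩)
        simp only [hnorm, sq_abs]
    _ = 1 / 12 := by norm_num [integral_pow]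

theorem measurePreserving_nsmul_unitAddCircle {n : ℕ} (hn : n ≠ 0) :
    MeasurePreserving (fun t : UnitAddCircle => n • t) := by
  rcases (Nat.one_le_iff_ne_zero.mpr hn).eq_or_lt with rfl | hn
  · simp only [one_smul]
    exact MeasurePreserving.id volume
  · exact (AddCircle.ergodic_nsmul hn).toMeasurePreserving

theorem integral_norm_sq_add_nsmul (s : UnitAddCircle) {n : ℕ} (hn : n ≠ 0) :
    ∫ t : UnitAddCircle, ‖s + n • t‖ ^ 2 = 1 / 12 := by
  have hmp := measurePreserving_nsmul_unitAddCircle hn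
  have hmap := integral_map (f := fun t : UnitAddCircle => ‖s + t‖ ^ 2) hmp.aemeasurable
    (by fun_prop)
  rw [hmp.map_eq] at hmap
  rw [← hmap, integral_add_left_eq_self (fun t : UnitAddCircle => ‖t‖ ^ 2) s,
    integral_unitAddCircle_norm_sq]

theorem integrable_norm_sq_add_nsmul (s : UnitAddCircle) (n : ℕ) :
    Integrable fun t : UnitAddCircle => ‖s + n • t‖ ^ 2 :=
  Continuous.integrable_of_hasCompactSupport (by fun_prop) (.of_compactSpace _)

theorem exists_shift_sum_norm_sq_le {ι κ : Type*} [Fintype ι] [Fintype κ] {p : ℕ} (hp : p ≠ 0)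
    (hcard : Fintype.card ι = Fintype.card κ * p) (b : ι → UnitAddCircle)
    (s : κ → UnitAddCircle) :
    ∃ t : UnitAddCircle, p * ∑ i, ‖b i + t‖ ^ 2 - ∑ c, ‖s c + p • t‖ ^ 2 ≤
      Fintype.card κ * (p ^ 2 - 1) / 12 := by
  have hb : Integrable fun t : UnitAddCircle => p * ∑ i, ‖b i + (1 : ℕ) • t‖ ^ 2 :=
    (integrable_finsetSum _ fun i _ => integrable_norm_sq_add_nsmul (b i) 1).const_mul _
  have hs : Integrable fun t : UnitAddCircle => ∑ c, ‖s c + p • t‖ ^ 2 :=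
    integrable_finsetSum _ fun c _ => integrable_norm_sq_add_nsmul (s c) p
  have : IsProbabilityMeasure (volume : Measure UnitAddCircle) := ⟨UnitAddCircle.measure_univ⟩
  obtain ⟨t, ht⟩ := exists_le_integral (hb.sub hs)
  simp only [Pi.sub_apply, one_smul] at ht
  refine ⟨t, ht.trans_eq ?_⟩
  simp only [one_smul] at hb
  rw [integral_sub hb hs, integral_const_mul,
    integral_finsetSum _ fun i _ => by simpa using integrable_norm_sq_add_nsmul (b i) 1,
    integral_finsetSum _ fun c _ => integrable_norm_sq_add_nsmul (s c) p]
  have hb_integral (i : ι) : ∫ t, ‖b i + t‖ ^ 2 = 1 / 12 := by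
    simpa using integral_norm_sq_add_nsmul (b i) one_ne_zero
  simp only [hb_integral, integral_norm_sq_add_nsmul _ hp, Finset.sum_const, Finset.card_univ,
    hcard, nsmul_eq_mul]
  push_cast
  ring

theorem norm_sum_coe_add_nsmul_le {ι : Type*} (A : Finset ι) (b : ι → ℝ) (t : ℝ) :
    ‖((∑ i ∈ A, b i : ℝ) : UnitAddCircle) + A.card • (t : UnitAddCircle)‖ ≤
      |∑ i ∈ A, (b i + t - round (b i + t))| := by
  have hrepr : ∑ i ∈ A, (b i + t - round (b i + t)) =
      ∑ i ∈ A, b i + A.card • t - (∑ i ∈ A, round (b i + t) : ℤ) := by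
    rw [Finset.sum_sub_distrib, Finset.sum_add_distrib, Finset.sum_const]
    push_cast
    rfl
  rw [hrepr, ← AddCircle.coe_nsmul, ← AddCircle.coe_add, UnitAddCircle.norm_eq]
  exact round_le _ _

theorem exists_shift_round_error_le {ι κ : Type*} [Fintype ι] [Fintype κ] [DecidableEq κ]
    (π : ι → κ) {p : ℕ} (hp : p ≠ 0) (hπ : ∀ c, (Finset.univ.filter (π · = c)).card = p)
    (b : ι → ℝ) :
    ∃ t : ℝ, p * ∑ i, (b i + t - round (b i + t)) ^ 2 -
        ∑ c, (∑ i with π i = c, (b i + t - round (b i + t))) ^ 2 ≤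
      Fintype.card κ * (p ^ 2 - 1) / 12 := by
  have hcard : Fintype.card ι = Fintype.card κ * p := by
    rw [← Finset.card_univ, Finset.card_eq_sum_card_fiberwise (f := π) (t := Finset.univ) (by simp)]
    simp only [hπ, Finset.sum_const, Finset.card_univ, smul_eq_mul]
  obtain ⟨t, ht⟩ := exists_shift_sum_norm_sq_le hp hcard (fun i => (b i : UnitAddCircle))
    (fun c => ((∑ i with π i = c, b i : ℝ) : UnitAddCircle))
  obtain ⟨t, rfl⟩ := QuotientAddGroup.mk_surjective t
  have herr (i : ι) : (b i + t - round (b i + t)) ^ 2 = ‖(b i : UnitAddCircle) + t‖ ^ 2 := by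
    rw [← AddCircle.coe_add, UnitAddCircle.norm_eq, sq_abs]
  refine ⟨t, le_trans ?_ ht⟩
  simp only [herr]
  refine sub_le_sub_left (Finset.sum_le_sum fun c _ => ?_) _
  rw [← sq_abs (∑ i with π i = c, _), ← hπ c]
  gcongr
  exact norm_sum_coe_add_nsmul_le _ b t

end RandomShift

section Parseval

theorem sum_norm_sq_sum_mulShift {R : Type*} [CommRing R] [Fintype R] {ψ : AddChar R ℂ}
    (hψ : ψ.IsPrimitive) (f : R → ℝ) :
    ∑ x, ‖∑ c, (f c : ℂ) * ψ (x * c)‖ ^ 2 = Fintype.card R * ∑ c, f c ^ 2 := by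
  classical
  apply Complex.ofReal_injective
  push_cast
  calc ∑ x, (‖∑ c, (f c : ℂ) * ψ (x * c)‖ : ℂ) ^ 2
      = ∑ x, ∑ c, ∑ d, (f c * f d : ℂ) * ψ (x * (c - d)) := by
        refine Finset.sum_congr rfl fun x _ => ?_
        rw [← Complex.mul_conj', map_sum, Finset.sum_mul_sum]
        refine Finset.sum_congr rfl fun c _ => Finset.sum_congr rfl fun d _ => ?_
        rw [map_mul (starRingEnd ℂ), Complex.conj_ofReal, ← AddChar.map_neg_eq_conj,
          mul_sub, sub_eq_add_neg, AddChar.map_add_eq_mul]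
        ring
    _ = ∑ c, ∑ d, (f c * f d : ℂ) * ∑ x, ψ (x * (c - d)) := by
        rw [Finset.sum_comm]
        refine Finset.sum_congr rfl fun c _ => ?_
        rw [Finset.sum_comm]
        simp only [Finset.mul_sum]
    _ = Fintype.card R * ∑ c, (f c : ℂ) ^ 2 := by
        simp only [AddChar.sum_mulShift _ hψ, sub_eq_zero, Nat.cast_ite, Nat.cast_zero, mul_ite,
          mul_zero, Finset.sum_ite_eq, Finset.mem_univ, if_true, Finset.mul_sum]
        exact Finset.sum_congr rfl fun c _ => by ring

theorem sum_nthRootsFinset_eq_sum_zmod {R A : Type*} [CommRing R] [IsDomain R]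
    [AddCommMonoid A] {M : ℕ} [NeZero M] {ω : R} (hω : IsPrimitiveRoot ω M) (g : R → A) :
    ∑ η ∈ Polynomial.nthRootsFinset M (1 : R), g η = ∑ x : ZMod M, g (ω ^ x.val) := by
  have hM := NeZero.pos M
  symm
  refine Finset.sum_nbij (fun x : ZMod M => ω ^ x.val) (fun x _ => ?_) (fun x _ y _ hxy => ?_)
    (fun η hη => ?_) (fun _ _ => rfl)
  · rw [Polynomial.mem_nthRootsFinset hM, ← pow_mul, mul_comm, pow_mul, hω.pow_eq_one, one_pow]
  · exact ZMod.val_injective M (hω.pow_inj x.val_lt y.val_lt hxy)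
  · obtain ⟨i, hi, rfl⟩ := hω.eq_pow_of_pow_eq_one ((Polynomial.mem_nthRootsFinset hM 1).mp hη)
    exact ⟨i, Finset.mem_coe.mpr (Finset.mem_univ _), by simp only [ZMod.val_cast_of_lt hi]⟩

theorem sum_nthRootsFinset_norm_sq (M : ℕ) [NeZero M] {ι : Type*} [Fintype ι] (e : ι → ℕ)
    (b : ι → ℝ) :
    ∑ η ∈ Polynomial.nthRootsFinset M (1 : ℂ), ‖∑ i, (b i : ℂ) * η ^ e i‖ ^ 2 =
      M * ∑ c : ZMod M, (∑ i with (e i : ZMod M) = c, b i) ^ 2 := by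
  have hω := Complex.isPrimitiveRoot_exp M (NeZero.ne M)
  have hψ := AddChar.zmodChar_primitive_of_primitive_root M hω
  set ω := Complex.exp (2 * Real.pi * Complex.I / M)
  have hparseval := sum_norm_sq_sum_mulShift hψ
  rw [ZMod.card] at hparseval
  rw [sum_nthRootsFinset_eq_sum_zmod hω, ← hparseval]
  refine Finset.sum_congr rfl fun x _ => ?_
  congr 2
  rw [← Finset.sum_fiberwise (g := fun i => (e i : ZMod M))]
  refine Finset.sum_congr rfl fun c _ => ?_
  push_cast
  rw [Finset.sum_mul]
  refine Finset.sum_congr rfl fun i hi => ?_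
  rw [← (Finset.mem_filter.mp hi).2, mul_comm x, ← nsmul_eq_mul, AddChar.map_nsmul_eq_pow,
    AddChar.zmodChar_apply]

theorem nthRootsFinset_prime_pow_sdiff {R : Type*} [CommRing R] [IsDomain R] {p : ℕ}
    [Fact p.Prime] (k : ℕ) [DecidableEq R] :
    Polynomial.nthRootsFinset (p ^ (k + 1)) (1 : R) \ Polynomial.nthRootsFinset (p ^ k) (1 : R) =
      primitiveRoots (p ^ (k + 1)) R := by
  have hp : 0 < p := NeZero.pos p
  ext η
  rw [Finset.mem_sdiff, Polynomial.mem_nthRootsFinset (by positivity),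
    Polynomial.mem_nthRootsFinset (by positivity), mem_primitiveRoots (by positivity),
    IsPrimitiveRoot.iff_orderOf]
  refine ⟨fun h => orderOf_eq_prime_pow h.2 h.1, fun h => ⟨h ▸ pow_orderOf_eq_one η, fun h' => ?_⟩⟩
  have := orderOf_dvd_of_pow_eq_one h'
  rw [h, Nat.pow_dvd_pow_iff_le_right (Fact.out : p.Prime).one_lt] at this
  lia

theorem sum_primitiveRoots_norm_sq (p k : ℕ) [Fact p.Prime] (b : ZMod (p ^ (k + 1)) → ℝ) :
    ∑ η ∈ primitiveRoots (p ^ (k + 1)) ℂ, ‖∑ j, (b j : ℂ) * η ^ j.val‖ ^ 2 =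
      p ^ k * (p * ∑ j, b j ^ 2 -
        ∑ c : ZMod (p ^ k), (∑ j with (j.val : ZMod (p ^ k)) = c, b j) ^ 2) := by
  have hsub : Polynomial.nthRootsFinset (p ^ k) (1 : ℂ) ⊆
      Polynomial.nthRootsFinset (p ^ (k + 1)) 1 := fun η hη => by
    rw [Polynomial.mem_nthRootsFinset (NeZero.pos _)] at hη ⊢
    rw [pow_succ, pow_mul, hη, one_pow]
  have hfib (c : ZMod (p ^ (k + 1))) : ({j | ((j.val : ℕ) : ZMod (p ^ (k + 1))) = c} : Finset _) =
      {c} := by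
    ext j
    simp
  rw [← nthRootsFinset_prime_pow_sdiff, Finset.sum_sdiff_eq_sub hsub,
    sum_nthRootsFinset_norm_sq, sum_nthRootsFinset_norm_sq]
  simp only [hfib, Finset.sum_singleton]
  push_cast
  ring

theorem card_fiber_mul_card_of_surjective {G H : Type*} [AddGroup G] [AddGroup H] [Fintype G]
    [Fintype H] [DecidableEq H] {f : G →+ H} (hf : Function.Surjective f) (c : H) :
    (Finset.univ.filter (f · = c)).card * Fintype.card H = Fintype.card G := by
  have hfiber (d : H) : (Finset.univ.filter (f · = d)).card = (Finset.univ.filter (f · = c)).card :=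
    AddMonoidHom.card_fiber_eq_of_mem_range f (hf d) (hf c)
  have hsum := Finset.card_eq_sum_card_fiberwise (f := f) (s := Finset.univ) (t := Finset.univ)
    (by simp)
  simp only [hfiber, Finset.sum_const, Finset.card_univ, smul_eq_mul] at hsum
  rw [hsum, mul_comm]

theorem card_filter_natCast_val_eq (p k : ℕ) [NeZero p] (c : ZMod (p ^ k)) :
    (Finset.univ.filter fun j : ZMod (p ^ (k + 1)) => (j.val : ZMod (p ^ k)) = c).card = p := by
  have hdvd : p ^ k ∣ p ^ (k + 1) := pow_dvd_pow p k.le_succ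
  have hcard := card_fiber_mul_card_of_surjective
    (f := (ZMod.castHom hdvd (ZMod (p ^ k))).toAddMonoidHom) (ZMod.castHom_surjective hdvd) c
  simp only [ZMod.card, pow_succ', RingHom.toAddMonoidHom_eq_coe, AddMonoidHom.coe_coe,
    ZMod.castHom_apply, ZMod.cast_eq_val] at hcard
  exact Nat.eq_of_mul_eq_mul_right (NeZero.pos (p ^ k)) hcard

end Parseval

section NormBound

theorem prod_le_pow_of_sum_le {ι : Type*} {s : Finset ι} {f : ι → ℝ}
    (hf : ∀ i ∈ s, 0 ≤ f i) {B : ℝ} (hB : ∑ i ∈ s, f i ≤ s.card * B) :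
    ∏ i ∈ s, f i ≤ B ^ s.card := by
  rcases s.eq_empty_or_nonempty with rfl | hs
  · simp
  have hcard : (0 : ℝ) < s.card := by exact_mod_cast hs.card_pos
  have hamgm := Real.geom_mean_le_arith_mean s (fun _ => 1) f (by simp) (by simpa using hcard) hf
  simp only [Real.rpow_one, Finset.sum_const, nsmul_eq_mul, mul_one, one_mul] at hamgm
  calc ∏ i ∈ s, f i = ((∏ i ∈ s, f i) ^ ((s.card : ℝ)⁻¹)) ^ s.card :=
        (Real.rpow_inv_natCast_pow (Finset.prod_nonneg hf) hs.card_pos.ne').symm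
    _ ≤ B ^ s.card := by
        gcongr
        · exact Real.rpow_nonneg (Finset.prod_nonneg hf) _
        · exact hamgm.trans ((div_le_iff₀' hcard).mpr hB)

theorem norm_sq_le_pow_of_sum_embeddings_le {L : Type*} [Field L] [NumberField L] {y : L} {B : ℝ}
    (hB : ∑ φ : L →ₐ[ℚ] ℂ, ‖φ y‖ ^ 2 ≤ Module.finrank ℚ L * B) :
    (Algebra.norm ℚ y : ℝ) ^ 2 ≤ B ^ Module.finrank ℚ L := by
  have hnorm : (Algebra.norm ℚ y : ℝ) ^ 2 = ∏ φ : L →ₐ[ℚ] ℂ, ‖φ y‖ ^ 2 := by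
    rw [Finset.prod_pow, ← norm_prod, ← Algebra.norm_eq_prod_embeddings, eq_ratCast,
      Complex.norm_ratCast, sq_abs]
  rw [hnorm, ← AlgHom.card ℚ L ℂ]
  rw [← AlgHom.card ℚ L ℂ] at hB
  exact prod_le_pow_of_sum_le (fun φ _ => by positivity) hB

theorem sum_pow_val_eq_zero {R : Type*} [CommRing R] [IsDomain R] {q : ℕ} [NeZero q]
    {ζ : R} (hζ : IsPrimitiveRoot ζ q) (hq : 1 < q) : ∑ j : ZMod q, ζ ^ j.val = 0 := by
  have hψ : AddChar.zmodChar q hζ.pow_eq_one ≠ 1 :=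
    AddChar.ne_one_iff.mpr ⟨(1 : ℕ), by
      rw [AddChar.zmodChar_apply', pow_one]
      exact hζ.ne_one hq⟩
  simpa only [AddChar.zmodChar_apply] using AddChar.sum_eq_zero_of_ne_one hψ

theorem sum_sub_const_mul_pow_val {R : Type*} [CommRing R] [IsDomain R] {q : ℕ} [NeZero q]
    {ζ : R} (hζ : IsPrimitiveRoot ζ q) (hq : 1 < q) (e : ZMod q → R) (t : R) :
    ∑ j, (e j - t) * ζ ^ j.val = ∑ j, e j * ζ ^ j.val := by
  simp only [sub_mul, Finset.sum_sub_distrib, ← Finset.mul_sum, sum_pow_val_eq_zero hζ hq,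
    mul_zero, sub_zero]

theorem finrank_of_isCyclotomicExtension_prime_pow (p k : ℕ) [Fact p.Prime] (L : Type*) [Field L]
    [Algebra ℚ L] [IsCyclotomicExtension {p ^ (k + 1)} ℚ L] :
    Module.finrank ℚ L = p ^ k * (p - 1) := by
  rw [IsCyclotomicExtension.finrank L (Polynomial.cyclotomic.irreducible_rat
    (NeZero.pos (p ^ (k + 1)))), Nat.totient_prime_pow_succ Fact.out]

variable {p k : ℕ} [Fact p.Prime] {L : Type*} [Field L] [NumberField L]
  [IsCyclotomicExtension {p ^ (k + 1)} ℚ L] {ζ : L}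

theorem sum_embeddings_norm_sq (hζ : IsPrimitiveRoot ζ (p ^ (k + 1)))
    (b : ZMod (p ^ (k + 1)) → ℝ) :
    ∑ φ : L →ₐ[ℚ] ℂ, ‖∑ j, (b j : ℂ) * φ ζ ^ j.val‖ ^ 2 =
      p ^ k * (p * ∑ j, b j ^ 2 -
        ∑ c : ZMod (p ^ k), (∑ j with (j.val : ZMod (p ^ k)) = c, b j) ^ 2) := by
  rw [← sum_primitiveRoots_norm_sq, ← Finset.sum_coe_sort (primitiveRoots _ _)]
  exact (hζ.embeddingsEquivPrimitiveRoots ℂ (Polynomial.cyclotomic.irreducible_rat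
    (NeZero.pos _))).sum_comp (fun η => ‖∑ j, (b j : ℂ) * (η : ℂ) ^ j.val‖ ^ 2)

theorem exists_shift_norm_sq_le (hζ : IsPrimitiveRoot ζ (p ^ (k + 1)))
    (b : ZMod (p ^ (k + 1)) → ℚ) :
    ∃ t : ℝ, (Algebra.norm ℚ (∑ j, ((b j - round ((b j : ℝ) + t) : ℚ) : L) * ζ ^ j.val) : ℝ) ^ 2 ≤
      (p ^ k * (p + 1) / 12) ^ (p ^ k * (p - 1)) := by
  have hp := (Fact.out : p.Prime)
  obtain ⟨t, ht⟩ := exists_shift_round_error_le (fun j => ((j.val : ℕ) : ZMod (p ^ k))) hp.ne_zero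
    (card_filter_natCast_val_eq p k) (fun j => (b j : ℝ))
  refine ⟨t, ?_⟩
  have hdeg := finrank_of_isCyclotomicExtension_prime_pow p k L
  set e : ZMod (p ^ (k + 1)) → ℝ := fun j => b j + t - round (b j + t : ℝ) with he
  have hembed (φ : L →ₐ[ℚ] ℂ) :
      φ (∑ j, ((b j - round ((b j : ℝ) + t) : ℚ) : L) * ζ ^ j.val) =
        ∑ j, (e j : ℂ) * φ ζ ^ j.val := by
    rw [← sum_sub_const_mul_pow_val (hζ.map_of_injective (f := φ) φ.injective)
      (Nat.one_lt_pow k.succ_ne_zero hp.one_lt) _ (t : ℂ), map_sum]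
    refine Finset.sum_congr rfl fun j _ => ?_
    rw [map_mul, map_pow, map_ratCast, he]
    push_cast
    rw [add_sub_right_comm, add_sub_cancel_right]
  rw [← hdeg]
  refine norm_sq_le_pow_of_sum_embeddings_le ?_
  simp only [hembed, sum_embeddings_norm_sq hζ, hdeg]
  rw [ZMod.card] at ht
  calc (p : ℝ) ^ k * (p * ∑ j, e j ^ 2 -
        ∑ c : ZMod (p ^ k), (∑ j with (j.val : ZMod (p ^ k)) = c, e j) ^ 2)
      ≤ p ^ k * (p ^ k * (p ^ 2 - 1) / 12) := by
        gcongr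
        exact_mod_cast ht
    _ = (p ^ k * (p - 1) : ℕ) * (p ^ k * (p + 1) / 12) := by
        push_cast [hp.one_le]
        ring

end NormBound

section GaloisAction

theorem isCyclotomicExtension_tower_top (S : Set ℕ) (A B C : Type*) [CommRing A] [CommRing B]
    [CommRing C] [Algebra A B] [Algebra A C] [Algebra B C] [IsScalarTower A B C]
    [h : IsCyclotomicExtension S A C] : IsCyclotomicExtension S B C := by
  refine ⟨h.exists_isPrimitiveRoot, fun x => ?_⟩
  have hle : Algebra.adjoin A {b : C | ∃ n ∈ S, n ≠ 0 ∧ b ^ n = 1} ≤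
      (Algebra.adjoin B {b : C | ∃ n ∈ S, n ≠ 0 ∧ b ^ n = 1}).restrictScalars A :=
    Algebra.adjoin_le Algebra.subset_adjoin
  exact hle (h.adjoin_roots x)

theorem pow_val_add {M : Type*} [CommMonoid M] {q : ℕ} [NeZero q] {ζ : M} (hζ : ζ ^ q = 1)
    (i j : ZMod q) : ζ ^ (i + j).val = ζ ^ i.val * ζ ^ j.val := by
  simpa only [AddChar.zmodChar_apply] using AddChar.map_add_eq_mul (AddChar.zmodChar q hζ) i j

theorem pow_val_mul {M : Type*} [CommMonoid M] {q : ℕ} [NeZero q] {ζ : M} (hζ : ζ ^ q = 1)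
    (i j : ZMod q) : ζ ^ (i * j).val = (ζ ^ i.val) ^ j.val := by
  have := AddChar.map_nsmul_eq_pow (AddChar.zmodChar q hζ) j.val i
  rwa [nsmul_eq_mul, ZMod.natCast_zmod_val, mul_comm, AddChar.zmodChar_apply,
    AddChar.zmodChar_apply] at this

theorem pow_val_natCast {M : Type*} [CommMonoid M] {q : ℕ} [NeZero q] {ζ : M} (hζ : ζ ^ q = 1)
    (i : ℕ) : ζ ^ (i : ZMod q).val = ζ ^ i := by
  rw [← AddChar.zmodChar_apply hζ, AddChar.zmodChar_apply']

theorem pow_val_one {M : Type*} [CommMonoid M] {q : ℕ} [NeZero q] {ζ : M} (hζ : ζ ^ q = 1) :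
    ζ ^ (1 : ZMod q).val = ζ := by
  simpa only [Nat.cast_one, pow_one] using pow_val_natCast hζ 1

variable {q : ℕ} [NeZero q] {L : Type*} [Field L] {ζ : L}

theorem exists_eq_sum_mul_pow_val [CharZero L] [IsCyclotomicExtension {q} ℚ L]
    (hζ : IsPrimitiveRoot ζ q) (y : L) :
    ∃ b : ZMod q → ℚ, y = ∑ j, (b j : L) * ζ ^ j.val := by
  have hy : y ∈ (Polynomial.aeval (R := ℚ) ζ).range := by
    rw [← Algebra.adjoin_singleton_eq_range_aeval,
      IsCyclotomicExtension.adjoin_primitive_root_eq_top hζ]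
    trivial
  obtain ⟨f, rfl⟩ := (AlgHom.mem_range _).mp hy
  have hspan : Polynomial.aeval ζ f ∈
      Submodule.span ℚ (Set.range fun j : ZMod q => ζ ^ j.val) := by
    rw [Polynomial.aeval_eq_sum_range]
    exact Submodule.sum_mem _ fun i _ => Submodule.smul_mem _ _
      (Submodule.subset_span ⟨(i : ZMod q), pow_val_natCast hζ.pow_eq_one i⟩)
  obtain ⟨b, hb⟩ := (Submodule.mem_span_range_iff_exists_fun ℚ).mp hspan
  exact ⟨b, by simpa only [Rat.smul_def] using hb.symm⟩

theorem isIntegral_sum_mul_pow_val (hζ : IsPrimitiveRoot ζ q) (c : ZMod q → ℤ) :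
    IsIntegral ℤ (∑ j, (c j : L) * ζ ^ j.val) :=
  IsIntegral.sum _ fun j _ =>
    (isIntegral_algebraMap (x := c j)).mul ((hζ.isIntegral (NeZero.pos q)).pow _)

variable {K : Type*} [Field K] [Algebra K L]

theorem map_sum_mul_pow_val (hζ : IsPrimitiveRoot ζ q) (σ : Gal(L/K)) (b : ZMod q → L) :
    σ (∑ j, b (hζ.autToPow K σ * j) * ζ ^ j.val) =
      ∑ j, σ (b j) * ζ ^ j.val := by
  rw [map_sum]
  refine Fintype.sum_equiv (Units.mulLeft (hζ.autToPow K σ)) _ _ fun j => ?_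
  rw [map_mul, map_pow, Units.mulLeft_apply, pow_val_mul hζ.pow_eq_one, hζ.autToPow_spec K σ]

theorem sub_map_eq_mul_pow_val_sub_one (hζ : IsPrimitiveRoot ζ q) (σ : Gal(L/K)) :
    ζ - σ ζ = σ ζ * (ζ ^ (1 - hζ.autToPow K σ : ZMod q).val - 1) := by
  rw [mul_sub, mul_one, ← hζ.autToPow_spec K σ, ← pow_val_add hζ.pow_eq_one, add_sub_cancel,
    pow_val_one hζ.pow_eq_one]

theorem exists_invariant_eq_sum_mul_pow_val [CharZero L] [IsCyclotomicExtension {q} ℚ L]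
    [FiniteDimensional K L]
    (hζ : IsPrimitiveRoot ζ q) (x : K) :
    ∃ b : ZMod q → ℚ, algebraMap K L x = ∑ j, (b j : L) * ζ ^ j.val ∧
      ∀ (σ : Gal(L/K)) (j : ZMod q), b (hζ.autToPow K σ * j) = b j := by
  obtain ⟨b, hb⟩ := exists_eq_sum_mul_pow_val hζ (algebraMap K L x)
  have hconj (σ : Gal(L/K)) :
      ∑ j, (b (hζ.autToPow K σ * j) : L) * ζ ^ j.val = algebraMap K L x := by
    apply σ.injective
    rw [map_sum_mul_pow_val hζ σ (fun j => (b j : L)), σ.commutes, hb]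
    simp only [map_ratCast]
  refine ⟨fun j => (Fintype.card Gal(L/K) : ℚ)⁻¹ * ∑ σ : Gal(L/K), b (hζ.autToPow K σ * j),
    ?_, fun τ j => ?_⟩
  · calc algebraMap K L x
        = (Fintype.card Gal(L/K) : L)⁻¹ *
            ∑ σ : Gal(L/K), ∑ j, (b (hζ.autToPow K σ * j) : L) * ζ ^ j.val := by
          simp only [hconj, Finset.sum_const, Finset.card_univ, nsmul_eq_mul]
          rw [inv_mul_cancel_left₀ (Nat.cast_ne_zero.mpr Fintype.card_ne_zero)]
      _ = _ := by
          rw [Finset.sum_comm, Finset.mul_sum]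
          push_cast
          simp only [Finset.sum_mul, mul_assoc]
  · refine congrArg ((Fintype.card Gal(L/K) : ℚ)⁻¹ * ·) ?_
    refine Fintype.sum_equiv (Equiv.mulRight τ) _ _ fun σ => ?_
    rw [Equiv.coe_mulRight, map_mul, Units.val_mul, mul_assoc]

theorem exists_algebraMap_eq_of_isIntegral [NumberField K] [NumberField L] [IsGalois K L] {w : L}
    (hw : IsIntegral ℤ w) (hfix : ∀ σ : Gal(L/K), σ w = w) :
    ∃ c : 𝓞 K, algebraMap K L c = w := by
  let z : 𝓞 L := ⟨w, hw⟩
  obtain ⟨c, hc⟩ := Algebra.IsInvariant.isInvariant (A := 𝓞 K) (G := Gal(L/K)) z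
    fun σ => RingOfIntegers.ext (hfix σ)
  exact ⟨c, congrArg (algebraMap (𝓞 L) L) hc⟩

theorem norm_algebraMap_eq_norm_pow [NumberField K] [NumberField L] (y : K) :
    Algebra.norm ℚ (algebraMap K L y) = Algebra.norm ℚ y ^ Module.finrank K L := by
  rw [← Algebra.norm_norm (S := K), Algebra.norm_algebraMap, map_pow]

end GaloisAction

section Approximation

variable {p k : ℕ} [Fact p.Prime] {L : Type*} [Field L] [NumberField L]
  [IsCyclotomicExtension {p ^ (k + 1)} ℚ L] {ζ : L} {K : Type*} [Field K] [NumberField K]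
  [Algebra K L]

theorem exists_norm_sub_pow_le (hζ : IsPrimitiveRoot ζ (p ^ (k + 1))) (x : K) :
    ∃ c : 𝓞 K, (Algebra.norm ℚ (x - c) : ℝ) ^ (2 * Module.finrank K L) ≤
      (p ^ k * (p + 1) / 12) ^ (p ^ k * (p - 1)) := by
  have := isCyclotomicExtension_tower_top {p ^ (k + 1)} ℚ K L
  have := IsCyclotomicExtension.isGalois {p ^ (k + 1)} K L
  obtain ⟨b, hb, hinv⟩ := exists_invariant_eq_sum_mul_pow_val hζ x
  obtain ⟨t, ht⟩ := exists_shift_norm_sq_le hζ b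
  let a : ZMod (p ^ (k + 1)) → ℤ := fun j => round ((b j : ℝ) + t)
  have hfix (σ : Gal(L/K)) : σ (∑ j, (a j : L) * ζ ^ j.val) = ∑ j, (a j : L) * ζ ^ j.val := by
    simpa only [a, hinv, map_intCast] using map_sum_mul_pow_val hζ σ fun j => (a j : L)
  obtain ⟨c, hc⟩ := exists_algebraMap_eq_of_isIntegral (isIntegral_sum_mul_pow_val hζ a) hfix
  have hsub : algebraMap K L (x - c) = ∑ j, ((b j - a j : ℚ) : L) * ζ ^ j.val := by
    rw [map_sub, hb, hc, ← Finset.sum_sub_distrib]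
    push_cast
    simp only [sub_mul]
  refine ⟨c, ?_⟩
  rw [← hsub, norm_algebraMap_eq_norm_pow] at ht
  push_cast at ht
  rwa [mul_comm 2, pow_mul]

end Approximation

section Conductor

-- Given `m ≠ 0` and `p` prime, `m + 2 ≤ p * m` means `(p, m) ≠ (2, 1)`.
theorem exists_pow_eq_one_add_prime_pow_mul {p m k : ℕ} (hp : p.Prime) (hm0 : m ≠ 0)
    (hpm : m + 2 ≤ p * m) {a : ℤ} (ha : (1 + p ^ m * a : ZMod (p ^ (k + 1))) ≠ 1) :
    ∃ (i : ℕ) (b : ZMod (p ^ (k + 1))),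
      (1 + p ^ m * a : ZMod (p ^ (k + 1))) ^ i = 1 + p ^ k * b ∧ 1 + p ^ k * b ≠ 1 := by
  have ha0 : a ≠ 0 := by
    rintro rfl
    simp at ha
  obtain ⟨a', haa', ha'⟩ := (FiniteMultiplicity.of_prime_left (Nat.prime_iff_prime_int.mp hp)
    ha0).exists_eq_pow_mul_and_not_dvd
  set e := multiplicity (p : ℤ) a
  have hu : (1 + p ^ m * a : ZMod (p ^ (k + 1))) = 1 + p ^ (m + e) * a' := by
    rw [haa']
    push_cast
    ring
  rw [hu] at ha ⊢
  have hlt : m + e < k + 1 := by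
    by_contra! hle
    refine ha ?_
    rw [← Nat.cast_pow, (ZMod.natCast_eq_zero_iff _ _).mpr (pow_dvd_pow p hle), zero_mul, add_zero]
  obtain ⟨n, rfl⟩ : ∃ n, k = n + (m + e) := ⟨k - (m + e), by omega⟩
  have hpme : m + e + 2 ≤ p * (m + e) := by nlinarith [hp.two_le]
  have horder := ZMod.orderOf_one_add_mul_prime_pow hp (m + e) (by omega) hpme a' ha' (n + 1)
  rw [add_right_comm n 1] at horder
  obtain ⟨y, hy⟩ := ZMod.exists_one_add_mul_pow_prime_pow_eq
    (R := ZMod (p ^ (n + (m + e) + 1))) (u := p ^ (m + e)) (v := p) hp (dvd_pow_self _ (by omega))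
    (by
      rw [← pow_succ', ← pow_succ, ← pow_mul, mul_comm (m + e)]
      exact pow_dvd_pow _ hpme) a' n
  rw [← pow_add] at hy
  refine ⟨p ^ n, a' + p * y, hy, ?_⟩
  rw [← hy]
  refine pow_ne_one_of_lt_orderOf (pow_pos hp.pos n).ne' ?_
  rw [horder]
  exact Nat.pow_lt_pow_right hp.one_lt n.lt_succ_self

variable {p k : ℕ} [Fact p.Prime] {L : Type*} [Field L] [NumberField L]
  [IsCyclotomicExtension {p ^ (k + 1)} ℚ L] {ζ : L} {K : Type*} [Field K] [NumberField K]
  [Algebra K L]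

theorem finrank_adjoin_pow_prime (hk : k ≠ 0) (hζ : IsPrimitiveRoot ζ (p ^ (k + 1))) :
    Module.finrank (IntermediateField.adjoin ℚ {ζ ^ p}) L = p := by
  have hp : p.Prime := Fact.out
  obtain ⟨l, rfl⟩ := Nat.exists_eq_succ_of_ne_zero hk
  have hξ : IsPrimitiveRoot (ζ ^ p) (p ^ (l + 1)) :=
    hζ.pow (NeZero.pos _) (pow_succ' p (l + 1))
  have : IsCyclotomicExtension {p ^ (l + 1)} ℚ (IntermediateField.adjoin ℚ {ζ ^ p}) :=
    hξ.intermediateField_adjoin_isCyclotomicExtension ℚ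
  have hmul := Module.finrank_mul_finrank ℚ (IntermediateField.adjoin ℚ {ζ ^ p}) L
  have hE : Module.finrank ℚ (IntermediateField.adjoin ℚ {ζ ^ p}) = p ^ l * (p - 1) :=
    finrank_of_isCyclotomicExtension_prime_pow p l _
  rw [hE, finrank_of_isCyclotomicExtension_prime_pow p (l + 1)] at hmul
  have hpos : 0 < p ^ l * (p - 1) := Nat.mul_pos (pow_pos hp.pos l) (Nat.sub_pos_of_lt hp.one_lt)
  refine Nat.eq_of_mul_eq_mul_left hpos (hmul.trans ?_)
  ring

theorem fieldRange_le_adjoin_pow_prime (hk : k ≠ 0) (hζ : IsPrimitiveRoot ζ (p ^ (k + 1)))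
    {τ : Gal(L/K)} (hτ1 : τ ≠ 1) (hτ : τ (ζ ^ p) = ζ ^ p) :
    (IsScalarTower.toAlgHom ℚ K L).fieldRange ≤ IntermediateField.adjoin ℚ {ζ ^ p} := by
  have : IsGalois ℚ L := IsCyclotomicExtension.isGalois {p ^ (k + 1)} ℚ L
  set E := IntermediateField.adjoin ℚ {ζ ^ p}
  have hcard : Nat.card E.fixingSubgroup = p := by
    rw [IsGalois.card_fixingSubgroup_eq_finrank, finrank_adjoin_pow_prime hk hζ]
  have hmem : AlgEquiv.restrictScalars ℚ τ ∈ E.fixingSubgroup :=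
    (IntermediateField.mem_fixingSubgroup_iff _ _).mpr
      ((IntermediateField.forall_mem_adjoin_smul_eq_self_iff ℚ (AlgEquiv.restrictScalars ℚ τ)).mpr
        (by rintro _ rfl; exact hτ))
  have hne : (⟨_, hmem⟩ : E.fixingSubgroup) ≠ 1 := fun h =>
    hτ1 (AlgEquiv.ext fun x => DFunLike.congr_fun (congrArg Subtype.val h) x)
  rw [← IsGalois.fixedField_fixingSubgroup E, IntermediateField.le_iff_le]
  intro ρ hρ
  obtain ⟨i, hi⟩ := Subgroup.mem_zpowers_iff.mp
    (zpowers_eq_top_of_prime_card hcard hne ▸ Subgroup.mem_top (⟨ρ, hρ⟩ : E.fixingSubgroup))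
  obtain rfl : _ = ρ := congrArg Subtype.val hi
  refine zpow_mem ((IntermediateField.mem_fixingSubgroup_iff _ _).mpr ?_) i
  rintro _ ⟨x, rfl⟩
  exact τ.commutes x

theorem eq_one_of_autToPow_eq (hk : k ≠ 0) (hζ : IsPrimitiveRoot ζ (p ^ (k + 1)))
    (hK : ¬ (IsScalarTower.toAlgHom ℚ K L).fieldRange ≤ IntermediateField.adjoin ℚ {ζ ^ p})
    {m : ℕ} (hm0 : m ≠ 0) (hpm : m + 2 ≤ p * m) {a : ℤ} {σ : Gal(L/K)}
    (hσ : (hζ.autToPow K σ : ZMod (p ^ (k + 1))) = 1 + p ^ m * a) : σ = 1 := by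
  have := isCyclotomicExtension_tower_top {p ^ (k + 1)} ℚ K L
  have hinj := hζ.autToPow_injective K
  by_contra hσ1
  have hne : (hζ.autToPow K σ : ZMod (p ^ (k + 1))) ≠ 1 := fun h =>
    hσ1 (hinj ((Units.ext h).trans (map_one _).symm))
  rw [hσ] at hne
  obtain ⟨i, b, hib, hb⟩ := exists_pow_eq_one_add_prime_pow_mul Fact.out hm0 hpm hne
  have hpow : (hζ.autToPow K (σ ^ i) : ZMod (p ^ (k + 1))) = 1 + p ^ k * b := by
    rw [map_pow, Units.val_pow_eq_pow_val, hσ, hib]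
  refine hK (fieldRange_le_adjoin_pow_prime hk hζ (τ := σ ^ i) ?_ ?_)
  · intro h
    rw [h, map_one, Units.val_one] at hpow
    exact hb hpow.symm
  · have hzero : (p : ZMod (p ^ (k + 1))) ^ (k + 1) = 0 := by
      rw [← Nat.cast_pow, ZMod.natCast_self]
    have hmul : (1 + p ^ k * b) * (p : ZMod (p ^ (k + 1))) = p := by
      linear_combination b * hzero
    rw [map_pow, ← hζ.autToPow_spec K, hpow, ← pow_mul,
      ← pow_val_natCast hζ.pow_eq_one (_ * p), Nat.cast_mul, ZMod.natCast_val,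
      ZMod.cast_id, hmul, pow_val_natCast hζ.pow_eq_one]

end Conductor

section Discriminant

variable {K L : Type*} [Field K] [Field L] [Algebra K L]

theorem injective_eval_gal_of_adjoin_eq_top {θ : L} (hθ : Algebra.adjoin K {θ} = ⊤) :
    Function.Injective fun σ : Gal(L/K) => σ θ := fun σ τ h =>
  AlgEquiv.coe_toAlgHom_injective <|
    AlgHom.ext_of_adjoin_eq_top hθ fun x hx => by
      rw [Set.mem_singleton_iff.mp hx]
      exact h

theorem minpoly_map_eq_prod_gal [FiniteDimensional K L] [IsGalois K L] {θ : L}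
    (hθ : Algebra.adjoin K {θ} = ⊤) :
    (minpoly K θ).map (algebraMap K L) = ∏ σ : Gal(L/K), (Polynomial.X - Polynomial.C (σ θ)) := by
  refine Polynomial.eq_of_monic_of_dvd_of_natDegree_le (Polynomial.monic_prod_X_sub_C _ _)
    ((minpoly.monic (Algebra.IsIntegral.isIntegral θ)).map _) ?_ ?_
  · refine Finset.prod_dvd_of_coprime (fun σ _ τ _ hστ =>
      Polynomial.pairwise_coprime_X_sub_C (injective_eval_gal_of_adjoin_eq_top hθ) hστ)
      fun σ _ => ?_
    rw [Polynomial.dvd_iff_isRoot, Polynomial.IsRoot.def, Polynomial.eval_map_algebraMap,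
      Polynomial.aeval_algEquiv, AlgHom.comp_apply, minpoly.aeval, map_zero]
  · rw [Polynomial.natDegree_map, Polynomial.natDegree_finsetProd_X_sub_C_eq_card,
      Finset.card_univ, ← Nat.card_eq_fintype_card, IsGalois.card_aut_eq_finrank]
    exact minpoly.natDegree_le θ

theorem aeval_derivative_minpoly_eq_prod_gal [FiniteDimensional K L] [IsGalois K L]
    [DecidableEq Gal(L/K)] {θ : L} (hθ : Algebra.adjoin K {θ} = ⊤) :
    Polynomial.aeval θ (Polynomial.derivative (minpoly K θ)) =
      ∏ σ ∈ Finset.univ.erase (1 : Gal(L/K)), (θ - σ θ) := by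
  rw [← Polynomial.eval_map_algebraMap, ← Polynomial.derivative_map, minpoly_map_eq_prod_gal hθ,
    ← Finset.mul_prod_erase _ _ (Finset.mem_univ 1)]
  simp [Polynomial.eval_prod]

theorem natAbs_discr_le_prod_norm_sub_gal [NumberField K] [NumberField L] [IsGalois K L]
    [DecidableEq Gal(L/K)] (θ : 𝓞 L) (hθ : Algebra.adjoin K {(θ : L)} = ⊤) :
    ((discr L).natAbs : ℚ) ≤
      |∏ σ ∈ Finset.univ.erase (1 : Gal(L/K)), Algebra.norm ℚ (θ - σ θ : L)| *
        (discr K).natAbs ^ Module.finrank K L := by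
  set y := Polynomial.aeval θ (Polynomial.derivative (minpoly (𝓞 K) θ)) with hy
  have hyL : algebraMap (𝓞 L) L y = ∏ σ ∈ Finset.univ.erase (1 : Gal(L/K)), (θ - σ θ : L) := by
    rw [← aeval_derivative_minpoly_eq_prod_gal hθ, hy, ← Polynomial.aeval_algebraMap_apply,
      minpoly.isIntegrallyClosed_eq_field_fractions K L
        (Algebra.IsIntegral.isIntegral (R := 𝓞 K) θ),
      Polynomial.derivative_map, Polynomial.aeval_map_algebraMap]
  have hnorm : ((Algebra.norm ℤ y : ℤ) : ℚ) =
      ∏ σ ∈ Finset.univ.erase (1 : Gal(L/K)), Algebra.norm ℚ (θ - σ θ : L) := by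
    rw [Algebra.coe_norm_int, ← map_prod, ← hyL]
  have hne : Algebra.norm ℤ y ≠ 0 := by
    rw [Ne, Algebra.norm_eq_zero_iff, ← RingOfIntegers.coe_eq_zero_iff,
      hyL, Finset.prod_eq_zero_iff]
    rintro ⟨σ, hσ, h⟩
    exact Finset.ne_of_mem_erase hσ
      (injective_eval_gal_of_adjoin_eq_top hθ (sub_eq_zero.mp h).symm)
  have hle : (Ideal.absNorm (differentIdeal (𝓞 K) (𝓞 L)) : ℤ) ≤ |Algebra.norm ℤ y| :=
    Int.le_of_dvd (abs_pos.mpr hne) ((dvd_abs _ _).mpr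
      (Ideal.absNorm_dvd_norm_of_mem (aeval_derivative_mem_differentIdeal (𝓞 K) K L θ hθ)))
  rw [natAbs_discr_eq_absNorm_differentIdeal_mul_natAbs_discr_pow K (𝓞 K) L (𝓞 L), ← hnorm]
  push_cast
  gcongr
  exact_mod_cast hle

end Discriminant

section CyclotomicDiscriminant

theorem natAbs_discr_of_isCyclotomicExtension_prime_pow (p k : ℕ) [Fact p.Prime] (L : Type*)
    [Field L] [NumberField L] [IsCyclotomicExtension {p ^ (k + 1)} ℚ L] :
    (discr L).natAbs = p ^ (p ^ k * ((p - 1) * (k + 1) - 1)) := by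
  rw [IsCyclotomicExtension.Rat.discr_prime_pow_succ p k L]
  simp [Int.natAbs_mul, Int.natAbs_pow]

variable {p k : ℕ} [Fact p.Prime] {L : Type*} [Field L] [NumberField L]
  [IsCyclotomicExtension {p ^ (k + 1)} ℚ L] {ζ : L} {K : Type*} [Field K] [NumberField K]
  [Algebra K L]

theorem natAbs_discr_le_prod_norm_sub_of_isPrimitiveRoot [IsGalois K L]
    [DecidableEq Gal(L/K)] (hζ : IsPrimitiveRoot ζ (p ^ (k + 1))) :
    (p : ℚ) ^ (p ^ k * ((p - 1) * (k + 1) - 1)) ≤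
      |∏ σ ∈ Finset.univ.erase (1 : Gal(L/K)), Algebra.norm ℚ (ζ - σ ζ)| *
        (discr K).natAbs ^ Module.finrank K L := by
  have := isCyclotomicExtension_tower_top {p ^ (k + 1)} ℚ K L
  have h := natAbs_discr_le_prod_norm_sub_gal (K := K) hζ.toInteger
    (IsCyclotomicExtension.adjoin_primitive_root_eq_top hζ)
  rw [natAbs_discr_of_isCyclotomicExtension_prime_pow p k L] at h
  exact_mod_cast h

theorem eq_one_of_prime_pow_dvd_val_one_sub_autToPow (hk : k ≠ 0)
    (hζ : IsPrimitiveRoot ζ (p ^ (k + 1)))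
    (hK : ¬ (IsScalarTower.toAlgHom ℚ K L).fieldRange ≤ IntermediateField.adjoin ℚ {ζ ^ p})
    {m : ℕ} (hm0 : m ≠ 0) (hpm : m + 2 ≤ p * m) {σ : Gal(L/K)}
    (hσ : p ^ m ∣ (1 - hζ.autToPow K σ : ZMod (p ^ (k + 1))).val) : σ = 1 := by
  obtain ⟨d, hd⟩ := hσ
  refine eq_one_of_autToPow_eq hk hζ hK hm0 hpm (a := -d) ?_
  have h := ZMod.natCast_zmod_val (1 - hζ.autToPow K σ : ZMod (p ^ (k + 1)))
  rw [hd] at h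
  push_cast at h ⊢
  linear_combination h

theorem finrank_le_totient_prime_pow [IsGalois K L] (hk : k ≠ 0)
    (hζ : IsPrimitiveRoot ζ (p ^ (k + 1)))
    (hK : ¬ (IsScalarTower.toAlgHom ℚ K L).fieldRange ≤ IntermediateField.adjoin ℚ {ζ ^ p})
    {m : ℕ} (hm0 : m ≠ 0) (hpm : m + 2 ≤ p * m) (hmk : m ≤ k + 1) :
    Module.finrank K L ≤ (p ^ m).totient := by
  have hd : p ^ m ∣ p ^ (k + 1) := pow_dvd_pow p hmk
  have hinj : Function.Injective ((ZMod.unitsMap hd).comp (hζ.autToPow K)) := by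
    refine (injective_iff_map_eq_one _).mpr fun σ hσ =>
      eq_one_of_prime_pow_dvd_val_one_sub_autToPow hk hζ hK hm0 hpm ?_
    have hσ' : ZMod.castHom hd (ZMod (p ^ m)) (hζ.autToPow K σ) = 1 := congrArg Units.val hσ
    rw [← ZMod.natCast_eq_zero_iff, ZMod.natCast_val, ← ZMod.castHom_apply (h := hd), map_sub,
      map_one, hσ', sub_self]
  calc Module.finrank K L = Nat.card Gal(L/K) := (IsGalois.card_aut_eq_finrank K L).symm
    _ ≤ Nat.card (ZMod (p ^ m))ˣ := Nat.card_le_card_of_injective _ hinj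
    _ = (p ^ m).totient := by rw [Nat.card_eq_fintype_card, ZMod.card_units_eq_totient]

end CyclotomicDiscriminant

section OddPrime

variable {p k : ℕ} [Fact p.Prime] {L : Type*} [Field L] [NumberField L]
  [IsCyclotomicExtension {p ^ (k + 1)} ℚ L] {ζ : L} {K : Type*} [Field K] [NumberField K]
  [Algebra K L]

theorem norm_sub_map_of_prime_ne_two (hp2 : p ≠ 2) (hk : k ≠ 0)
    (hζ : IsPrimitiveRoot ζ (p ^ (k + 1)))
    (hK : ¬ (IsScalarTower.toAlgHom ℚ K L).fieldRange ≤ IntermediateField.adjoin ℚ {ζ ^ p})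
    {σ : Gal(L/K)} (hσ : σ ≠ 1) : Algebra.norm ℚ (ζ - σ ζ) = p := by
  have hp : p.Prime := Fact.out
  have hp3 : 3 ≤ p := hp.two_le.lt_of_ne' hp2
  have hirr := Polynomial.cyclotomic.irreducible_rat (NeZero.pos (p ^ (k + 1)))
  have hσζ : IsPrimitiveRoot (σ ζ) (p ^ (k + 1)) := hζ.map_of_injective σ.injective
  have hcop : (1 - hζ.autToPow K σ : ZMod (p ^ (k + 1))).val.Coprime (p ^ (k + 1)) :=
    Nat.Coprime.pow_right _ (Nat.Coprime.symm (hp.coprime_iff_not_dvd.mpr fun h =>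
      hσ (eq_one_of_prime_pow_dvd_val_one_sub_autToPow hk hζ hK one_ne_zero (by lia)
        ((pow_one p).symm ▸ h))))
  have hq : p ^ (k + 1) ≠ 2 := fun h => hp2 ((Nat.prime_two.pow_eq_iff).mp h).1
  rw [sub_map_eq_mul_pow_val_sub_one hζ, map_mul, hσζ.norm_eq_one hq hirr, one_mul,
    (hζ.pow_of_coprime _ hcop).norm_sub_one_of_prime_ne_two hirr hp2]

theorem prime_pow_le_mul_natAbs_discr_pow_of_prime_ne_two [IsGalois K L]
    (hp2 : p ≠ 2) (hk : k ≠ 0) (hζ : IsPrimitiveRoot ζ (p ^ (k + 1)))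
    (hK : ¬ (IsScalarTower.toAlgHom ℚ K L).fieldRange ≤ IntermediateField.adjoin ℚ {ζ ^ p}) :
    p ^ (p ^ k * ((p - 1) * (k + 1) - 1)) ≤
      p ^ (p - 2) * (discr K).natAbs ^ Module.finrank K L := by
  classical
  have hp : p.Prime := Fact.out
  have hp3 : 3 ≤ p := hp.two_le.lt_of_ne' hp2
  have hm : Module.finrank K L ≤ p - 1 := by
    simpa only [pow_one, Nat.totient_prime hp] using
      finrank_le_totient_prime_pow hk hζ hK one_ne_zero (by lia) (by lia)
  have h := natAbs_discr_le_prod_norm_sub_of_isPrimitiveRoot (K := K) hζ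
  rw [Finset.prod_congr rfl fun σ hσ =>
      norm_sub_map_of_prime_ne_two hp2 hk hζ hK (Finset.ne_of_mem_erase hσ),
    Finset.prod_const, Finset.card_erase_of_mem (Finset.mem_univ _), Finset.card_univ,
    ← Nat.card_eq_fintype_card, IsGalois.card_aut_eq_finrank,
    abs_of_nonneg (by positivity)] at h
  calc p ^ (p ^ k * ((p - 1) * (k + 1) - 1))
      ≤ p ^ (Module.finrank K L - 1) * (discr K).natAbs ^ Module.finrank K L := mod_cast h
    _ ≤ _ := Nat.mul_le_mul_right _ (Nat.pow_le_pow_right hp.pos (by lia))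

end OddPrime

section Numerics

theorem three_mul_sq_le_three_pow {n : ℕ} (hn : 3 ≤ n) : 3 * n ^ 2 ≤ 3 ^ n := by
  induction n, hn using Nat.le_induction with
  | base => norm_num
  | succ n hn ih => rw [pow_succ 3 n]; nlinarith

theorem add_one_pow_le_three_mul_pow (n : ℕ) : ((n : ℝ) + 1) ^ n ≤ 3 * (n : ℝ) ^ n := by
  rcases n.eq_zero_or_pos with rfl | hn
  · norm_num
  have : (0 : ℝ) < n := mod_cast hn
  calc ((n : ℝ) + 1) ^ n = (1 + (n : ℝ)⁻¹) ^ n * (n : ℝ) ^ n := by rw [← mul_pow]; field_simp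
    _ ≤ Real.exp 1 * (n : ℝ) ^ n := by gcongr; exact Real.one_add_inv_pow_le_exp
    _ ≤ 3 * (n : ℝ) ^ n := by gcongr; exact Real.exp_one_lt_three.le

theorem add_one_div_three_pow_le {n : ℕ} (hn : 3 ≤ n) :
    (((n : ℝ) + 1) / 3) ^ n ≤ (n : ℝ) ^ (n - 2) := by
  have h : (3 * (n : ℝ) ^ 2) ≤ 3 ^ n := mod_cast three_mul_sq_le_three_pow hn
  rw [div_pow, div_le_iff₀ (by positivity)]
  calc ((n : ℝ) + 1) ^ n ≤ 3 * (n : ℝ) ^ n := add_one_pow_le_three_mul_pow n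
    _ = (n : ℝ) ^ (n - 2) * (3 * (n : ℝ) ^ 2) := by
      rw [mul_left_comm, ← pow_add, Nat.sub_add_cancel (by lia)]
    _ ≤ (n : ℝ) ^ (n - 2) * 3 ^ n := by gcongr

theorem pow_mul_add_one_div_three_pow_mul_le {n k : ℕ} (hn : 3 ≤ n) (hk : k ≠ 0) :
    ((n : ℝ) ^ k * (n + 1) / 3) ^ (n ^ k * (n - 1)) * (n : ℝ) ^ (n - 2) ≤
      (n : ℝ) ^ (n ^ k * ((n - 1) * (k + 1) - 1)) := by
  obtain ⟨l, rfl⟩ := Nat.exists_eq_succ_of_ne_zero hk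
  have hn1 : (1 : ℝ) ≤ n := mod_cast (by lia : 1 ≤ n)
  have hM : 1 ≤ n ^ l := Nat.one_le_pow _ _ (by lia)
  have hexp : (n - 1) * (l + 1 + 1) - 1 = (l + 1) * (n - 1) + (n - 2) := by
    rw [Nat.mul_succ, mul_comm]
    lia
  have hsmall : (((n : ℝ) + 1) / 3) ^ (n ^ (l + 1) * (n - 1)) ≤
      (n : ℝ) ^ ((n - 2) * (n ^ l * (n - 1))) := by
    rw [pow_succ', mul_assoc, pow_mul, pow_mul (n : ℝ)]
    gcongr
    exact add_one_div_three_pow_le hn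
  have hle : n ^ l * (n - 1) + 1 ≤ n ^ (l + 1) := by
    rw [pow_succ, Nat.mul_sub_one]
    have := Nat.le_mul_of_pos_right (n ^ l) (by lia : 0 < n)
    lia
  calc ((n : ℝ) ^ (l + 1) * (n + 1) / 3) ^ (n ^ (l + 1) * (n - 1)) * (n : ℝ) ^ (n - 2)
      = ((n : ℝ) ^ (l + 1)) ^ (n ^ (l + 1) * (n - 1)) *
          ((((n : ℝ) + 1) / 3) ^ (n ^ (l + 1) * (n - 1)) * (n : ℝ) ^ (n - 2)) := by
        rw [mul_div_assoc, mul_pow, mul_assoc]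
    _ ≤ ((n : ℝ) ^ (l + 1)) ^ (n ^ (l + 1) * (n - 1)) *
          ((n : ℝ) ^ ((n - 2) * (n ^ l * (n - 1))) * (n : ℝ) ^ (n - 2)) := by gcongr
    _ = ((n : ℝ) ^ (l + 1)) ^ (n ^ (l + 1) * (n - 1)) *
          (n : ℝ) ^ ((n - 2) * (n ^ l * (n - 1) + 1)) := by rw [← pow_add, mul_add_one]
    _ ≤ ((n : ℝ) ^ (l + 1)) ^ (n ^ (l + 1) * (n - 1)) * (n : ℝ) ^ ((n - 2) * n ^ (l + 1)) := by
        gcongr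
    _ = (n : ℝ) ^ (n ^ (l + 1) * ((n - 1) * (l + 1 + 1) - 1)) := by
        rw [hexp, ← pow_mul, ← pow_add]
        ring_nf

end Numerics

section OddPrimeBound

variable {p k : ℕ} [Fact p.Prime] {L : Type*} [Field L] [NumberField L]
  [IsCyclotomicExtension {p ^ (k + 1)} ℚ L] {ζ : L} {K : Type*} [Field K] [NumberField K]
  [Algebra K L]

theorem exists_norm_sub_pow_le_discr_of_prime_ne_two (hp2 : p ≠ 2) (hk : k ≠ 0)
    (hζ : IsPrimitiveRoot ζ (p ^ (k + 1)))
    (hK : ¬ (IsScalarTower.toAlgHom ℚ K L).fieldRange ≤ IntermediateField.adjoin ℚ {ζ ^ p})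
    (x : K) :
    ∃ c : 𝓞 K, (Algebra.norm ℚ (x - c) : ℝ) ^ (2 * Module.finrank K L) ≤
      (4 : ℝ)⁻¹ ^ Module.finrank ℚ L * (discr K).natAbs ^ Module.finrank K L := by
  have hp : p.Prime := Fact.out
  have hp3 : 3 ≤ p := hp.two_le.lt_of_ne' hp2
  have := isCyclotomicExtension_tower_top {p ^ (k + 1)} ℚ K L
  have := IsCyclotomicExtension.isGalois {p ^ (k + 1)} K L
  obtain ⟨c, hc⟩ := exists_norm_sub_pow_le hζ x
  have hdiscr : (p : ℝ) ^ (p ^ k * ((p - 1) * (k + 1) - 1)) ≤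
      (p : ℝ) ^ (p - 2) * (discr K).natAbs ^ Module.finrank K L :=
    mod_cast prime_pow_le_mul_natAbs_discr_pow_of_prime_ne_two hp2 hk hζ hK
  have hbound : ((p : ℝ) ^ k * (p + 1) / 3) ^ (p ^ k * (p - 1)) ≤
      (discr K).natAbs ^ Module.finrank K L := by
    refine le_of_mul_le_mul_right ?_ (by positivity : (0 : ℝ) < (p : ℝ) ^ (p - 2))
    rw [mul_comm (((discr K).natAbs : ℝ) ^ _)]
    exact (pow_mul_add_one_div_three_pow_mul_le hp3 hk).trans hdiscr
  refine ⟨c, hc.trans ?_⟩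
  rw [finrank_of_isCyclotomicExtension_prime_pow p k L,
    show (p : ℝ) ^ k * (p + 1) / 12 = 4⁻¹ * (p ^ k * (p + 1) / 3) by ring, mul_pow]
  gcongr

end OddPrimeBound

section Conjugation

variable {q : ℕ} {L : Type*} [Field L] {ζ : L} {K : Type*} [Field K] [Algebra K L]

theorem exists_gal_map_eq_inv_of_isReal [NeZero q] [NumberField L] [IsGalois K L]
    (hK : ∀ (φ : K →+* ℂ) (x : K), (φ x).im = 0) (hζ : IsPrimitiveRoot ζ q) :
    ∃ σ : Gal(L/K), σ ζ = ζ⁻¹ := by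
  obtain ⟨φ⟩ := (inferInstance : Nonempty (L →+* ℂ))
  have hres : φ.comp (algebraMap K L) =
      (ComplexEmbedding.conjugate φ).comp (algebraMap K L) :=
    RingHom.ext fun x => (Complex.conj_eq_iff_im.mpr (hK (φ.comp (algebraMap K L)) x)).symm
  obtain ⟨σ, hσ⟩ := ComplexEmbedding.exists_comp_symm_eq_of_comp_eq φ _ hres
  have hnorm : ‖φ ζ‖ = 1 := (hζ.map_of_injective φ.injective).norm'_eq_one (NeZero.ne q)
  refine ⟨σ.symm, φ.injective ?_⟩
  rw [map_inv₀, Complex.inv_eq_conj hnorm]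
  exact RingHom.congr_fun hσ ζ

theorem ne_one_of_map_eq_inv (hq : 2 < q) (hζ : IsPrimitiveRoot ζ q) {σ : Gal(L/K)}
    (hσ : σ ζ = ζ⁻¹) : σ ≠ 1 := by
  rintro rfl
  refine hζ.pow_ne_one_of_pos_of_lt two_ne_zero hq ?_
  have hinv : ζ = ζ⁻¹ := hσ
  rw [sq]
  nth_rw 1 [hinv]
  exact inv_mul_cancel₀ (hζ.ne_zero (by lia))

theorem autToPow_eq_neg_one_of_map_eq_inv [NeZero q] (hζ : IsPrimitiveRoot ζ q) {σ : Gal(L/K)}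
    (hσ : σ ζ = ζ⁻¹) : (hζ.autToPow K σ : ZMod q) = -1 := by
  refine ZMod.val_injective q (hζ.pow_inj (ZMod.val_lt _) (ZMod.val_lt _) ?_)
  rw [hζ.autToPow_spec K σ, hσ]
  refine inv_eq_of_mul_eq_one_right ?_
  nth_rw 1 [← pow_val_one hζ.pow_eq_one]
  rw [← pow_val_add hζ.pow_eq_one, add_neg_cancel, ZMod.val_zero, pow_zero]

theorem univ_gal_eq_pair_of_finrank_le_two [FiniteDimensional K L] [IsGalois K L]
    [DecidableEq Gal(L/K)] (hm : Module.finrank K L ≤ 2) {σ : Gal(L/K)} (hσ : σ ≠ 1) :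
    (Finset.univ : Finset Gal(L/K)) = {1, σ} := by
  refine (Finset.eq_of_subset_of_card_le (Finset.subset_univ _) ?_).symm
  rwa [Finset.card_pair hσ.symm, Finset.card_univ, ← Nat.card_eq_fintype_card,
    IsGalois.card_aut_eq_finrank]

end Conjugation

section Symmetric

variable {q : ℕ} [NeZero q]

theorem one_add_mul_sum_mul_pow_val {R : Type*} [CommRing R] {ζ : R} (hζ : ζ ^ q = 1)
    (b : ZMod q → R) :
    (1 + ζ) * ∑ j, b j * ζ ^ j.val = ∑ j, (b j + b (j - 1)) * ζ ^ j.val := by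
  have hshift : ζ * ∑ j, b j * ζ ^ j.val = ∑ j, b (j - 1) * ζ ^ j.val := by
    rw [Finset.mul_sum]
    refine Fintype.sum_equiv (Equiv.addRight 1) _ _ fun j => ?_
    rw [Equiv.coe_addRight, add_sub_cancel_right, pow_val_add hζ, pow_val_one hζ]
    ring
  rw [add_mul, one_mul, hshift, ← Finset.sum_add_distrib]
  simp only [add_mul]

theorem sum_mul_neg_one_pow_val_eq_zero (hq : Even q) {c : ZMod q → ℤ}
    (hc : ∀ j, c (1 - j) = c j) : ∑ j, c j * (-1) ^ j.val = 0 := by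
  refine self_eq_neg.mp ?_
  rw [← Finset.sum_neg_distrib]
  refine Fintype.sum_equiv (Equiv.subLeft 1) _ _ fun j => ?_
  have h := pow_val_add (M := ℤ) hq.neg_one_pow (1 - j) j
  rw [sub_add_cancel, pow_val_one hq.neg_one_pow] at h
  have hsq : ((-1 : ℤ) ^ j.val) ^ 2 = 1 := by rw [← pow_mul, mul_comm, pow_mul]; simp
  rw [Equiv.subLeft_apply, hc]
  linear_combination -(c j * (-1) ^ j.val * h) - c j * (-1) ^ (1 - j).val * hsq

theorem one_add_dvd_sum_mul_pow_val {R : Type*} [CommRing R] (hq : Even q) {c : ZMod q → ℤ}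
    (hc : ∀ j, c (1 - j) = c j) (z : R) : 1 + z ∣ ∑ j, (c j : R) * z ^ j.val := by
  have h0 : ∑ j, (c j : R) * (-1) ^ j.val = 0 :=
    mod_cast congrArg (Int.cast : ℤ → R) (sum_mul_neg_one_pow_val_eq_zero hq hc)
  rw [← sub_zero (∑ j, (c j : R) * z ^ j.val), ← h0, ← Finset.sum_sub_distrib]
  refine Finset.dvd_sum fun j _ => ?_
  rw [← mul_sub, add_comm, ← sub_neg_eq_add]
  exact (sub_dvd_pow_sub_pow z (-1) j.val).mul_left _

variable {L : Type*} [Field L] {ζ : L} {K : Type*} [Field K] [Algebra K L]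

theorem mul_map_sum_mul_pow_val_of_map_eq_inv (hζ : IsPrimitiveRoot ζ q) {σ : Gal(L/K)}
    (hσ : σ ζ = ζ⁻¹) {c : ZMod q → ℤ} (hc : ∀ j, c (1 - j) = c j) :
    ζ * σ (∑ j, (c j : L) * ζ ^ j.val) = ∑ j, (c j : L) * ζ ^ j.val := by
  rw [map_sum, Finset.mul_sum]
  refine Fintype.sum_equiv (Equiv.subLeft 1) _ _ fun j => ?_
  have hpow : ζ ^ (1 - j).val * ζ ^ j.val = ζ := by
    rw [← pow_val_add hζ.pow_eq_one, sub_add_cancel, pow_val_one hζ.pow_eq_one]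
  have hζ0 : ζ ≠ 0 := hζ.ne_zero (NeZero.ne q)
  rw [Equiv.subLeft_apply, hc, map_mul, map_pow, map_intCast, hσ, inv_pow]
  nth_rw 1 [← hpow]
  field_simp

theorem exists_sum_mul_pow_val_eq_one_add_mul [NumberField L] [NumberField K] [IsGalois K L]
    (hq : Even q) (hζ : IsPrimitiveRoot ζ q) (hζ1 : 1 + ζ ≠ 0) {σ : Gal(L/K)} (hσ : σ ζ = ζ⁻¹)
    (hgal : ∀ τ : Gal(L/K), τ = 1 ∨ τ = σ) {c : ZMod q → ℤ} (hc : ∀ j, c (1 - j) = c j) :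
    ∃ v : 𝓞 K, ∑ j, (c j : L) * ζ ^ j.val = (1 + ζ) * algebraMap K L v := by
  obtain ⟨w, hw⟩ := one_add_dvd_sum_mul_pow_val hq hc (hζ.toInteger)
  have hwL : ∑ j, (c j : L) * ζ ^ j.val = (1 + ζ) * (w : L) := by
    have hζL : algebraMap (𝓞 L) L hζ.toInteger = ζ := rfl
    simpa only [map_sum, map_mul, map_add, map_one, map_pow, map_intCast, hζL] using
      congrArg (algebraMap (𝓞 L) L) hw
  have hfix : σ (w : L) = w := by
    have h := mul_map_sum_mul_pow_val_of_map_eq_inv hζ hσ hc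
    have hζ0 : ζ ≠ 0 := hζ.ne_zero (NeZero.ne q)
    rw [hwL, map_mul, map_add, map_one, hσ, ← mul_assoc, mul_add, mul_one, mul_inv_cancel₀ hζ0,
      add_comm ζ] at h
    exact mul_left_cancel₀ hζ1 h
  obtain ⟨v, hv⟩ := exists_algebraMap_eq_of_isIntegral (K := K) w.isIntegral_coe fun τ => by
    rcases hgal τ with rfl | rfl
    exacts [rfl, hfix]
  exact ⟨v, by rw [hv, hwL]⟩

end Symmetric

section PrimeTwo

variable {k : ℕ} {L : Type*} [Field L] [NumberField L] [IsCyclotomicExtension {2 ^ (k + 1)} ℚ L]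
  {ζ : L}

theorem norm_sq_sub_one_of_two_pow (hk : k ≠ 0) (hζ : IsPrimitiveRoot ζ (2 ^ (k + 1))) :
    Algebra.norm ℚ (ζ ^ 2 - 1) = 4 := by
  have h := hζ.norm_pow_sub_one_eq_prime_pow_of_ne_zero
    (Polynomial.cyclotomic.irreducible_rat (NeZero.pos (2 ^ (k + 1))))
    (Nat.one_le_iff_ne_zero.mpr hk) hk
  rw [pow_one] at h
  exact h.trans (by norm_num)

theorem norm_one_add_of_two_pow (hk : k ≠ 0) (hζ : IsPrimitiveRoot ζ (2 ^ (k + 1))) :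
    Algebra.norm ℚ (1 + ζ) = 2 := by
  have h := hζ.norm_pow_sub_one_eq_prime_pow_of_ne_zero
    (Polynomial.cyclotomic.irreducible_rat (NeZero.pos (2 ^ (k + 1)))) (Nat.zero_le k) hk
  have hsq := norm_sq_sub_one_of_two_pow hk hζ
  rw [show ζ ^ 2 - 1 = (ζ ^ 2 ^ 0 - 1) * (1 + ζ) by ring, map_mul, h, pow_zero, pow_one,
    Nat.cast_ofNat] at hsq
  linarith

variable {K : Type*} [Field K] [Algebra K L]

theorem norm_sub_map_of_map_eq_inv (hk : k ≠ 0) (hζ : IsPrimitiveRoot ζ (2 ^ (k + 1)))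
    {σ : Gal(L/K)} (hσ : σ ζ = ζ⁻¹) : Algebra.norm ℚ (ζ - σ ζ) = 4 := by
  have hq : 2 ^ (k + 1) ≠ 2 := fun h => hk (by simpa using (Nat.prime_two.pow_eq_iff.mp h).2)
  have hζ0 : ζ ≠ 0 := hζ.ne_zero (NeZero.ne _)
  rw [show ζ - σ ζ = ζ⁻¹ * (ζ ^ 2 - 1) by rw [hσ]; field_simp, map_mul,
    hζ.inv.norm_eq_one hq (Polynomial.cyclotomic.irreducible_rat (NeZero.pos (2 ^ (k + 1)))),
    norm_sq_sub_one_of_two_pow hk hζ, one_mul]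

variable [NumberField K]

theorem two_pow_le_four_mul_natAbs_discr_pow [IsGalois K L] [DecidableEq Gal(L/K)] (hk : k ≠ 0)
    (hζ : IsPrimitiveRoot ζ (2 ^ (k + 1))) {σ : Gal(L/K)} (hσ : σ ζ = ζ⁻¹)
    (hgal : Finset.univ = {1, σ}) :
    2 ^ (2 ^ k * k) ≤ 4 * (discr K).natAbs ^ Module.finrank K L := by
  have hσ1 : σ ≠ 1 := ne_one_of_map_eq_inv (lt_self_pow₀ one_lt_two (by lia)) hζ hσ
  have h := natAbs_discr_le_prod_norm_sub_of_isPrimitiveRoot (K := K) hζ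
  rw [hgal, Finset.erase_insert (Finset.notMem_singleton.mpr hσ1.symm), Finset.prod_singleton,
    norm_sub_map_of_map_eq_inv hk hζ hσ, abs_of_pos four_pos, Nat.add_one_sub_one, one_mul,
    Nat.add_sub_cancel] at h
  exact_mod_cast h

theorem exists_norm_sub_pow_le_of_map_eq_inv [IsGalois K L] (hk : k ≠ 0)
    (hζ : IsPrimitiveRoot ζ (2 ^ (k + 1))) {σ : Gal(L/K)} (hσ : σ ζ = ζ⁻¹)
    (hgal : ∀ τ : Gal(L/K), τ = 1 ∨ τ = σ) (x : K) :
    ∃ c : 𝓞 K, 4 * (Algebra.norm ℚ (x - c) : ℝ) ^ (2 * Module.finrank K L) ≤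
      (2 ^ k / 4) ^ 2 ^ k := by
  obtain ⟨b, hb, hinv⟩ := exists_invariant_eq_sum_mul_pow_val hζ x
  have hneg (j) : b (-j) = b j := by
    simpa only [autToPow_eq_neg_one_of_map_eq_inv hζ hσ, neg_one_mul] using hinv σ j
  let b' : ZMod (2 ^ (k + 1)) → ℚ := fun j => b j + b (j - 1)
  have hsymm (j) : b' (1 - j) = b' j := by
    rw [show b' (1 - j) = b (1 - j) + b (1 - j - 1) from rfl, sub_sub_cancel_left, hneg, ← neg_sub,
      hneg, add_comm]
  obtain ⟨t, ht⟩ := exists_shift_norm_sq_le hζ b'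
  let a : ZMod (2 ^ (k + 1)) → ℤ := fun j => round ((b' j : ℝ) + t)
  have hnorm := norm_one_add_of_two_pow hk hζ
  have hne : 1 + ζ ≠ 0 := fun h0 => two_ne_zero (α := ℚ) (by rw [← hnorm, h0, Algebra.norm_zero])
  obtain ⟨c, hc⟩ := exists_sum_mul_pow_val_eq_one_add_mul
    (Even.pow_of_ne_zero even_two k.succ_ne_zero) hζ hne hσ hgal
    (c := a) fun j => by simp only [a, hsymm]
  have hsub : ∑ j, ((b' j - a j : ℚ) : L) * ζ ^ j.val = (1 + ζ) * algebraMap K L (x - c) := by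
    rw [map_sub, mul_sub, hb, ← hc, one_add_mul_sum_mul_pow_val hζ.pow_eq_one,
      ← Finset.sum_sub_distrib]
    push_cast [b']
    simp only [sub_mul]
  refine ⟨c, ?_⟩
  rw [hsub, map_mul, hnorm, norm_algebraMap_eq_norm_pow] at ht
  calc 4 * (Algebra.norm ℚ (x - c) : ℝ) ^ (2 * Module.finrank K L)
      = ((2 * Algebra.norm ℚ (x - c) ^ Module.finrank K L : ℚ) : ℝ) ^ 2 := by push_cast; ring
    _ ≤ _ := ht
    _ = (2 ^ k / 4) ^ 2 ^ k := by norm_num; ring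

theorem exists_norm_sub_pow_le_discr_of_two (hk : k ≠ 0)
    (hreal : ∀ (φ : K →+* ℂ) (x : K), (φ x).im = 0) (hζ : IsPrimitiveRoot ζ (2 ^ (k + 1)))
    (hK : ¬ (IsScalarTower.toAlgHom ℚ K L).fieldRange ≤ IntermediateField.adjoin ℚ {ζ ^ 2})
    (x : K) :
    ∃ c : 𝓞 K, (Algebra.norm ℚ (x - c) : ℝ) ^ (2 * Module.finrank K L) ≤
      (4 : ℝ)⁻¹ ^ Module.finrank ℚ L * (discr K).natAbs ^ Module.finrank K L := by
  classical
  have := isCyclotomicExtension_tower_top {2 ^ (k + 1)} ℚ K L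
  have := IsCyclotomicExtension.isGalois {2 ^ (k + 1)} K L
  obtain ⟨σ, hσ⟩ := exists_gal_map_eq_inv_of_isReal hreal hζ
  have hgal : Finset.univ = {1, σ} := univ_gal_eq_pair_of_finrank_le_two
    (finrank_le_totient_prime_pow (m := 2) hk hζ hK two_ne_zero le_rfl (by lia))
    (ne_one_of_map_eq_inv (lt_self_pow₀ one_lt_two (by lia)) hζ hσ)
  obtain ⟨c, hc⟩ := exists_norm_sub_pow_le_of_map_eq_inv hk hζ hσ
    (fun τ => by simpa only [hgal, Finset.mem_insert, Finset.mem_singleton] using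
      Finset.mem_univ τ) x
  have hdiscr : (2 : ℝ) ^ (2 ^ k * k) ≤ 4 * (discr K).natAbs ^ Module.finrank K L :=
    mod_cast two_pow_le_four_mul_natAbs_discr_pow hk hζ hσ hgal
  refine ⟨c, le_of_mul_le_mul_left ?_ (four_pos (α := ℝ))⟩
  calc 4 * (Algebra.norm ℚ (x - c) : ℝ) ^ (2 * Module.finrank K L)
      ≤ (2 ^ k / 4) ^ 2 ^ k := hc
    _ = (4 : ℝ)⁻¹ ^ Module.finrank ℚ L * 2 ^ (2 ^ k * k) := by
      rw [finrank_of_isCyclotomicExtension_prime_pow 2 k L]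
      ring
    _ ≤ (4 : ℝ)⁻¹ ^ Module.finrank ℚ L * (4 * (discr K).natAbs ^ Module.finrank K L) := by gcongr
    _ = _ := mul_left_comm _ _ _

end PrimeTwo

section HasConductor

theorem isCyclotomicExtension_cyclotomicField_rat (n : ℕ) [NeZero n] :
    IsCyclotomicExtension {n} ℚ (CyclotomicField n ℚ) := by
  have h : CyclotomicField.algebra n ℚ = DivisionRing.toRatAlgebra := Subsingleton.elim _ _
  exact h ▸ CyclotomicField.isCyclotomicExtension n ℚ

theorem HasConductor.not_fieldRange_le_adjoin {K : Type*} [Field K] [NumberField K] {f : ℕ+}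
    (hf : HasConductor K f) {L : Type*} [Field L] [NumberField L] [Algebra K L] {ζ : L}
    (hζ : IsPrimitiveRoot ζ f) {d : ℕ} (hd : d ∣ f) (hd1 : 1 < d) :
    ¬ (IsScalarTower.toAlgHom ℚ K L).fieldRange ≤ IntermediateField.adjoin ℚ {ζ ^ d} := by
  intro hle
  obtain ⟨e, he⟩ := hd
  have he0 : 0 < e := Nat.pos_of_mul_pos_left (he ▸ f.pos)
  have : NeZero e := ⟨he0.ne'⟩
  have : IsCyclotomicExtension {e} ℚ (IntermediateField.adjoin ℚ {ζ ^ d}) :=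
    (hζ.pow f.pos he).intermediateField_adjoin_isCyclotomicExtension ℚ
  have := isCyclotomicExtension_cyclotomicField_rat e
  let ψ : K →ₐ[ℚ] IntermediateField.adjoin ℚ {ζ ^ d} :=
    (IntermediateField.inclusion hle).comp (IsScalarTower.toAlgHom ℚ K L).rangeRestrict
  let θ := IsCyclotomicExtension.algEquiv {e} ℚ (IntermediateField.adjoin ℚ {ζ ^ d})
    (CyclotomicField e ℚ)
  have hfe : (f : ℕ) ≤ e := hf.2 ⟨e, he0⟩ ⟨θ.toAlgHom.comp ψ⟩
  rw [he] at hfe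
  exact (lt_mul_of_one_lt_left he0 hd1).not_ge hfe

end HasConductor

section EuclideanMinimum

variable {K : Type*} [Field K] [NumberField K]

theorem euclideanMinimum_le {B : ℝ} (h : ∀ x : K, ∃ c : 𝓞 K, |(Algebra.norm ℚ (x - c) : ℝ)| ≤ B) :
    euclideanMinimum K ≤ B :=
  ciSup_le fun x =>
    have ⟨c, hc⟩ := h x
    (ciInf_le ⟨0, Set.forall_mem_range.mpr fun _ => abs_nonneg _⟩ c).trans hc

theorem abs_le_of_pow_le_discr (L : Type*) [Field L] [NumberField L] [Algebra K L] {y : ℝ}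
    (h : y ^ (2 * Module.finrank K L) ≤
      (4 : ℝ)⁻¹ ^ Module.finrank ℚ L * (discr K).natAbs ^ Module.finrank K L) :
    |y| ≤ (2 : ℝ)⁻¹ ^ Module.finrank ℚ K * √|(discr K : ℝ)| := by
  have hm : 2 * Module.finrank K L ≠ 0 := mul_ne_zero two_ne_zero Module.finrank_pos.ne'
  have hbound : (4 : ℝ)⁻¹ ^ Module.finrank ℚ L * (discr K).natAbs ^ Module.finrank K L =
      (2⁻¹ ^ Module.finrank ℚ K * √|(discr K : ℝ)|) ^ (2 * Module.finrank K L) := by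
    rw [← Module.finrank_mul_finrank ℚ K L, pow_mul, ← mul_pow, pow_mul _ 2, mul_pow _ √_,
      Real.sq_sqrt (abs_nonneg _), pow_right_comm, Nat.cast_natAbs, Int.cast_abs]
    norm_num
  refine le_of_pow_le_pow_left₀ hm (by positivity) ?_
  rw [← hbound, (even_two_mul (Module.finrank K L)).pow_abs]
  exact h

end EuclideanMinimum

theorem euclideanMinimum_le_of_totallyReal_primePower_conductor_general
    (p r : ℕ) (hp : p.Prime) (hr : 2 ≤ r)
    (K : Type*) [Field K] [NumberField K]
    (htr : p = 2 → ∀ φ : K →+* ℂ, ∀ x : K, (φ x).im = 0)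
    (hcond : HasConductor K ⟨p ^ r, pow_pos hp.pos r⟩) :
    euclideanMinimum K ≤
      (2 : ℝ)⁻¹ ^ (Module.finrank ℚ K) * Real.sqrt |(NumberField.discr K : ℝ)| := by
  have : Fact p.Prime := ⟨hp⟩
  obtain ⟨k, rfl⟩ : ∃ k, r = k + 1 := ⟨r - 1, by lia⟩
  have hk : k ≠ 0 := by lia
  let L := CyclotomicField (p ^ (k + 1)) ℚ
  have : IsCyclotomicExtension {p ^ (k + 1)} ℚ L := isCyclotomicExtension_cyclotomicField_rat _
  have hζ := IsCyclotomicExtension.zeta_spec (p ^ (k + 1)) ℚ L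
  obtain ⟨φ⟩ : Nonempty (K →ₐ[ℚ] L) := hcond.1
  let : Algebra K L := φ.toRingHom.toAlgebra
  have hK := hcond.not_fieldRange_le_adjoin hζ (dvd_pow_self p k.succ_ne_zero) hp.one_lt
  refine euclideanMinimum_le fun x => ?_
  obtain ⟨c, hc⟩ : ∃ c : 𝓞 K, (Algebra.norm ℚ (x - c) : ℝ) ^ (2 * Module.finrank K L) ≤
      (4 : ℝ)⁻¹ ^ Module.finrank ℚ L * (discr K).natAbs ^ Module.finrank K L := by
    rcases eq_or_ne p 2 with rfl | hp2
    · exact exists_norm_sub_pow_le_discr_of_two hk (htr rfl) hζ hK x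
    · exact exists_norm_sub_pow_le_discr_of_prime_ne_two hp2 hk hζ hK x
  exact ⟨c, abs_le_of_pow_le_discr L hc⟩

theorem euclideanMinimum_le_of_totallyReal_primePower_conductor
    (p r : ℕ) (hp : p.Prime) (hr : 2 ≤ r)
    (K : Type*) [Field K] [NumberField K]
    (htr : ∀ φ : K →+* ℂ, ∀ x : K, (φ x).im = 0)
    (hcond : HasConductor K ⟨p ^ r, pow_pos hp.pos r⟩) :
    euclideanMinimum K ≤
      (2 : ℝ)⁻¹ ^ (Module.finrank ℚ K) * Real.sqrt |(NumberField.discr K : ℝ)| :=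
  euclideanMinimum_le_of_totallyReal_primePower_conductor_general p r hp hr K (fun _ => htr) hcond
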